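/- arXiv:1006.5617 — 7 statements merged into one kernel-verified Lean document; each statement's English description precedes it below -/
import Mathlib

section
/- (Theorem 1, assertion 1, sufficiency for M^n) Suppose L(t) := M'(t) + M(t)Q(t) − Q(t)M(t) = 0 for all t ∈ ℝ. Let y : ℝ → ℝ^m be differentiable with y'(t) = Q(t)·y(t) for all t, and suppose y(t₀) = M(t₀)·c for some t₀ ∈ ℝ and c ∈ ℝ^m. Then y(t) = M(t)·y(t) for all t ∈ ℝ. -/
open Matrix

/-- Theorem 1, assertion 1, sufficiency for `Mⁿ`: if `L(t) = M'(t) + M(t)Q(t) - Q(t)M(t) = 0`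
for all `t`, then any solution of `y' = Q(t)y` starting in `Mⁿ(t₀)` satisfies
`y(t) = M(t)y(t)` for all `t`. -/
theorem invariance_of_Mn_of_L_eq_zero (m n : ℕ) (hn : 1 ≤ n) (hnm : n < m)
    (Q : ℝ → Matrix (Fin m) (Fin m) ℝ)
    (Φ : ℝ → Matrix (Fin n) (Fin m) ℝ) (Φp : ℝ → Matrix (Fin m) (Fin n) ℝ)
    (Φ' : ℝ → Matrix (Fin n) (Fin m) ℝ) (Φp' : ℝ → Matrix (Fin m) (Fin n) ℝ)
    (hQ : ∀ i j, Continuous fun t => Q t i j)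
    (hΦ : ∀ t i j, HasDerivAt (fun s => Φ s i j) (Φ' t i j) t)
    (hΦc : ∀ i j, Continuous fun t => Φ' t i j)
    (hΦp : ∀ t i j, HasDerivAt (fun s => Φp s i j) (Φp' t i j) t)
    (hΦpc : ∀ i j, Continuous fun t => Φp' t i j)
    (hpseudo : ∀ t, Φ t * Φp t = 1)
    (M M' : ℝ → Matrix (Fin m) (Fin m) ℝ)
    (hM : ∀ t, M t = Φp t * Φ t)
    (hM' : ∀ t i j, HasDerivAt (fun s => M s i j) (M' t i j) t)
    (hL : ∀ t, M' t + M t * Q t - Q t * M t = 0)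
    (y : ℝ → Fin m → ℝ)
    (hy : ∀ t, HasDerivAt y (Q t *ᵥ y t) t)
    (t₀ : ℝ) (c : Fin m → ℝ) (hinit : y t₀ = M t₀ *ᵥ c) :
    ∀ t : ℝ, y t = M t *ᵥ y t := by
  have hMM : ∀ t, M t * M t = M t := by
    intro t
    rw [hM t, Matrix.mul_assoc, ← Matrix.mul_assoc (Φ t), hpseudo t, Matrix.one_mul]
  have hz : ∀ t, HasDerivAt (fun s => M s *ᵥ y s) (Q t *ᵥ (M t *ᵥ y t)) t := by
    intro t
    have e : Q t *ᵥ (M t *ᵥ y t) = M' t *ᵥ y t + M t *ᵥ (Q t *ᵥ y t) := by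
      rw [Matrix.mulVec_mulVec, Matrix.mulVec_mulVec, ← Matrix.add_mulVec,
        sub_eq_zero.mp (hL t)]
    rw [e, hasDerivAt_pi]
    intro i
    have h : HasDerivAt (fun s => ∑ j, M s i j * y s j)
        (∑ j, (M' t i j * y t j + M t i j * (Q t *ᵥ y t) j)) t :=
      HasDerivAt.fun_sum fun j _ => (hM' t i j).mul (hasDerivAt_pi.mp (hy t) j)
    rw [Finset.sum_add_distrib] at h
    exact h
  have h0 : y t₀ = M t₀ *ᵥ y t₀ := by
    rw [hinit, Matrix.mulVec_mulVec, hMM]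
  intro t
  obtain ⟨A, B, Ht, Ht₀⟩ : ∃ A B, t ∈ Set.Ioo A B ∧ t₀ ∈ Set.Ioo A B :=
    ⟨min t t₀ - 1, max t t₀ + 1, by constructor <;> grind, by constructor <;> grind⟩
  have hc : Continuous fun s => ∑ i, ∑ j, |Q s i j| := by fun_prop
  obtain ⟨C, hC⟩ := (isCompact_Icc (a := A) (b := B)).exists_bound_of_continuousOn
    hc.continuousOn
  have hlip : ∀ s ∈ Set.Ioo A B,
      LipschitzOnWith C.toNNReal (fun v : Fin m → ℝ => Q s *ᵥ v) Set.univ := by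
    intro s hs
    have hCs := (le_abs_self _).trans (hC s (Set.Ioo_subset_Icc_self hs))
    refine (LipschitzWith.of_dist_le_mul fun v w => ?_).lipschitzOnWith
    rw [dist_eq_norm, dist_eq_norm, ← Matrix.mulVec_sub]
    set u := v - w
    rw [pi_norm_le_iff_of_nonneg (by positivity)]
    intro i
    calc ‖(Q s *ᵥ u) i‖ ≤ ∑ j, ‖Q s i j * u j‖ :=
        norm_sum_le Finset.univ (fun j => Q s i j * u j)
      _ ≤ ∑ j, |Q s i j| * ‖u‖ := by
        refine Finset.sum_le_sum fun j _ => ?_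
        rw [norm_mul]
        exact mul_le_mul_of_nonneg_left (norm_le_pi_norm u j) (norm_nonneg _)
      _ = (∑ j, |Q s i j|) * ‖u‖ := by rw [Finset.sum_mul]
      _ ≤ C.toNNReal * ‖u‖ := by
        refine mul_le_mul_of_nonneg_right ?_ (norm_nonneg _)
        refine le_trans ?_ (hCs.trans (Real.le_coe_toNNReal C))
        exact Finset.single_le_sum (f := fun i => ∑ j, |Q s i j|)
          (fun i _ => Finset.sum_nonneg fun j _ => abs_nonneg _) (Finset.mem_univ i)
  exact ODE_solution_unique_of_mem_Ioo (v := fun s v => Q s *ᵥ v) (s := fun _ => Set.univ)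
    hlip Ht₀ (fun s _ => ⟨hy s, trivial⟩) (fun s _ => ⟨hz s, trivial⟩) h0 Ht
end

section
/- (Theorem 1, assertion 1, sufficiency for M^{m−n}) Suppose L(t) := M'(t) + M(t)Q(t) − Q(t)M(t) = 0 for all t ∈ ℝ. Let y : ℝ → ℝ^m be differentiable with y'(t) = Q(t)·y(t) for all t, and suppose y(t₀) = (E − M(t₀))·c for some t₀ ∈ ℝ and c ∈ ℝ^m. Then M(t)·y(t) = 0 for all t ∈ ℝ. -/
open Matrix

/-- Theorem 1, assertion 1, sufficiency for `M^{m-n}`: if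
`L(t) = M'(t) + M(t)Q(t) - Q(t)M(t) = 0` for all `t`, then any solution of `y' = Q(t)y`
starting in `M^{m-n}(t₀)` satisfies `M(t)y(t) = 0` for all `t`. -/
theorem invariance_of_Mmn_of_L_eq_zero (m n : ℕ) (hn : 1 ≤ n) (hnm : n < m)
    (Q : ℝ → Matrix (Fin m) (Fin m) ℝ)
    (Φ : ℝ → Matrix (Fin n) (Fin m) ℝ) (Φp : ℝ → Matrix (Fin m) (Fin n) ℝ)
    (Φ' : ℝ → Matrix (Fin n) (Fin m) ℝ) (Φp' : ℝ → Matrix (Fin m) (Fin n) ℝ)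
    (hQ : ∀ i j, Continuous fun t => Q t i j)
    (hΦ : ∀ t i j, HasDerivAt (fun s => Φ s i j) (Φ' t i j) t)
    (hΦc : ∀ i j, Continuous fun t => Φ' t i j)
    (hΦp : ∀ t i j, HasDerivAt (fun s => Φp s i j) (Φp' t i j) t)
    (hΦpc : ∀ i j, Continuous fun t => Φp' t i j)
    (hpseudo : ∀ t, Φ t * Φp t = 1)
    (M M' : ℝ → Matrix (Fin m) (Fin m) ℝ)
    (hM : ∀ t, M t = Φp t * Φ t)
    (hM' : ∀ t i j, HasDerivAt (fun s => M s i j) (M' t i j) t)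
    (hL : ∀ t, M' t + M t * Q t - Q t * M t = 0)
    (y : ℝ → Fin m → ℝ)
    (hy : ∀ t, HasDerivAt y (Q t *ᵥ y t) t)
    (t₀ : ℝ) (c : Fin m → ℝ) (hinit : y t₀ = (1 - M t₀) *ᵥ c) :
    ∀ t : ℝ, M t *ᵥ y t = 0 := by
  have hz : ∀ t, HasDerivAt (fun s => M s *ᵥ y s) (Q t *ᵥ (M t *ᵥ y t)) t := by
    intro t
    have hMe : M' t + M t * Q t = Q t * M t := sub_eq_zero.mp (hL t)
    rw [Matrix.mulVec_mulVec, ← hMe, Matrix.add_mulVec, ← Matrix.mulVec_mulVec]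
    rw [hasDerivAt_pi]
    intro i
    have hyj := hasDerivAt_pi.mp (hy t)
    have h := HasDerivAt.fun_sum (u := Finset.univ) (fun j _ => (hM' t i j).mul (hyj j))
    refine h.congr_deriv ?_
    simp only [Pi.add_apply, Matrix.mulVec, dotProduct, Finset.sum_add_distrib]
  have hz0 : M t₀ *ᵥ y t₀ = 0 := by
    have hid : M t₀ * M t₀ = M t₀ := by
      rw [hM, Matrix.mul_assoc, ← Matrix.mul_assoc (Φ t₀), hpseudo, Matrix.one_mul]
    rw [hinit, Matrix.mulVec_mulVec, Matrix.mul_sub, Matrix.mul_one, hid, sub_self,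
      Matrix.zero_mulVec]
  intro t
  obtain ⟨A, B, Ht, Ht₀⟩ : ∃ A B, t ∈ Set.Ioo A B ∧ t₀ ∈ Set.Ioo A B := by
    use (min (-|t|) (-|t₀|) - 1), (max |t| |t₀| + 1)
    grind
  have hNc : Continuous fun s => ∑ i, ∑ j, |Q s i j| :=
    continuous_finsetSum _ fun i _ => continuous_finsetSum _ fun j _ => (hQ i j).abs
  obtain ⟨C, hC⟩ := (isCompact_Icc (a := A) (b := B)).exists_bound_of_continuousOn
    hNc.continuousOn
  have hlip : ∀ s ∈ Set.Ioo A B,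
      LipschitzOnWith C.toNNReal (fun v : Fin m → ℝ => Q s *ᵥ v) Set.univ := by
    intro s hs
    have hb := hC s (Set.Ioo_subset_Icc_self hs)
    have hb' := (le_abs_self _).trans hb
    have hC0 : 0 ≤ C := (norm_nonneg _).trans hb
    refine LipschitzOnWith.of_dist_le_mul fun v _ w _ => ?_
    rw [Real.coe_toNNReal _ hC0, dist_eq_norm, dist_eq_norm, ← Matrix.mulVec_sub]
    refine (pi_norm_le_iff_of_nonneg (by positivity)).mpr fun i => ?_
    calc ‖(Q s *ᵥ (v - w)) i‖ ≤ ∑ j, ‖Q s i j * (v - w) j‖ := by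
          rw [Matrix.mulVec, dotProduct]; exact norm_sum_le _ _
      _ ≤ ∑ j, |Q s i j| * ‖v - w‖ := by
          refine Finset.sum_le_sum fun j _ => ?_
          rw [norm_mul, Real.norm_eq_abs (Q s i j)]
          exact mul_le_mul_of_nonneg_left (norm_le_pi_norm _ j) (abs_nonneg _)
      _ = (∑ j, |Q s i j|) * ‖v - w‖ := by rw [Finset.sum_mul]
      _ ≤ C * ‖v - w‖ := by
          refine mul_le_mul_of_nonneg_right (le_trans ?_ hb') (norm_nonneg _)
          exact Finset.single_le_sum (f := fun i => ∑ j, |Q s i j|)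
            (fun i _ => Finset.sum_nonneg fun j _ => abs_nonneg _) (Finset.mem_univ i)
  refine ODE_solution_unique_of_mem_Ioo (f := fun s => M s *ᵥ y s)
    (g := fun _ => (0 : Fin m → ℝ)) hlip Ht₀ (fun s _ => ⟨hz s, trivial⟩)
    (fun s _ => ⟨?_, trivial⟩) hz0 Ht
  simpa using hasDerivAt_const s (0 : Fin m → ℝ)
end

section
/- (Theorem 1, assertion 2, necessity) Let Y : ℝ → M_m(ℝ) be differentiable with Y'(t) = Q(t)·Y(t) for all t and Y(0) = E (the fundamental matrix of solutions of y' = Q(t)y). If for all t ∈ ℝ one has M(t)·Y(t)·Φ⁺(0) = Y(t)·Φ⁺(0) (i.e., every solution starting in M^n(0) stays in M^n(t)), then L(t)·Y(t)·Φ⁺(0) = 0 for all t ∈ ℝ, where L(t) := M'(t) + M(t)Q(t) − Q(t)M(t). -/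
open Matrix

theorem hasDerivAt_matmul_aux {a b c : ℕ} (A : ℝ → Matrix (Fin a) (Fin b) ℝ)
    (B : ℝ → Matrix (Fin b) (Fin c) ℝ) (A' : Matrix (Fin a) (Fin b) ℝ)
    (B' : Matrix (Fin b) (Fin c) ℝ) (t : ℝ)
    (hA : ∀ i j, HasDerivAt (fun s => A s i j) (A' i j) t)
    (hB : ∀ i j, HasDerivAt (fun s => B s i j) (B' i j) t) (i : Fin a) (j : Fin c) :
    HasDerivAt (fun s => (A s * B s) i j) ((A' * B t + A t * B') i j) t := by
  simp only [Matrix.add_apply, Matrix.mul_apply, ← Finset.sum_add_distrib]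
  exact HasDerivAt.fun_sum fun k _ => (hA i k).mul (hB k j)

/-- Theorem 1, assertion 2, necessity: if every solution of `y' = Q(t)y` starting in
`Mⁿ(0)` stays in `Mⁿ(t)` (expressed via the fundamental matrix `Y`), then
`L(t)·Y(t)·Φ⁺(0) = 0` for all `t`, where `L(t) = M'(t) + M(t)Q(t) - Q(t)M(t)`. -/
theorem L_annihilates_YPhi_of_invariant (m n : ℕ) (hn : 1 ≤ n) (hnm : n < m)
    (Q : ℝ → Matrix (Fin m) (Fin m) ℝ)
    (Φ : ℝ → Matrix (Fin n) (Fin m) ℝ) (Φp : ℝ → Matrix (Fin m) (Fin n) ℝ)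
    (Φ' : ℝ → Matrix (Fin n) (Fin m) ℝ) (Φp' : ℝ → Matrix (Fin m) (Fin n) ℝ)
    (hQ : ∀ i j, Continuous fun t => Q t i j)
    (hΦ : ∀ t i j, HasDerivAt (fun s => Φ s i j) (Φ' t i j) t)
    (hΦc : ∀ i j, Continuous fun t => Φ' t i j)
    (hΦp : ∀ t i j, HasDerivAt (fun s => Φp s i j) (Φp' t i j) t)
    (hΦpc : ∀ i j, Continuous fun t => Φp' t i j)
    (hpseudo : ∀ t, Φ t * Φp t = 1)
    (M M' : ℝ → Matrix (Fin m) (Fin m) ℝ)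
    (hM : ∀ t, M t = Φp t * Φ t)
    (hM' : ∀ t i j, HasDerivAt (fun s => M s i j) (M' t i j) t)
    (Y : ℝ → Matrix (Fin m) (Fin m) ℝ)
    (hY : ∀ t i j, HasDerivAt (fun s => Y s i j) ((Q t * Y t) i j) t)
    (hY0 : Y 0 = 1)
    (hinv : ∀ t, M t * Y t * Φp 0 = Y t * Φp 0) :
    ∀ t : ℝ, (M' t + M t * Q t - Q t * M t) * (Y t * Φp 0) = 0 := by
  intro t
  have hZ : ∀ i j, HasDerivAt (fun s => (Y s * Φp 0) i j) ((Q t * Y t * Φp 0) i j) t := by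
    intro i j
    have h := hasDerivAt_matmul_aux Y (fun _ => Φp 0) (Q t * Y t) 0 t (hY t)
      (fun i j => by simpa using hasDerivAt_const t (Φp 0 i j)) i j
    simpa using h
  have key : M' t * (Y t * Φp 0) + M t * (Q t * Y t * Φp 0) = Q t * Y t * Φp 0 := by
    ext i j
    have h := hasDerivAt_matmul_aux M (fun s => Y s * Φp 0) (M' t) _ t (hM' t) hZ i j
    have e : (fun s => (M s * (Y s * Φp 0)) i j) = fun s => (Y s * Φp 0) i j := by
      funext s
      rw [← Matrix.mul_assoc, hinv]
    rw [e] at h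
    exact h.unique (hZ i j)
  have h2 : M t * (Y t * Φp 0) = Y t * Φp 0 := by rw [← Matrix.mul_assoc, hinv]
  rw [Matrix.sub_mul, Matrix.add_mul, Matrix.mul_assoc (Q t), h2, Matrix.mul_assoc (M t),
    ← Matrix.mul_assoc (Q t), key, sub_self]
end

section
/- Under the hypothesis Φ(t)·Φ⁺(t) = E_n for all t, with P(t) := (Φ'(t) + Φ(t)Q(t))·Φ⁺(t), M(t) := Φ⁺(t)·Φ(t), and L(t) := M'(t) + M(t)Q(t) − Q(t)M(t), the identity (d/dt)Φ⁺(t) + Φ⁺(t)·P(t) − Q(t)·Φ⁺(t) = L(t)·Φ⁺(t) holds for all t ∈ ℝ. In particular, if L(t)·Φ⁺(t) = 0 for all t, then (d/dt)Φ⁺(t) + Φ⁺(t)·P(t) − Q(t)·Φ⁺(t) = 0 for all t. -/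
open Matrix

/-- The identity `(d/dt)Φ⁺(t) + Φ⁺(t)P(t) - Q(t)Φ⁺(t) = L(t)Φ⁺(t)` holds, where
`P(t) = (Φ'(t) + Φ(t)Q(t))Φ⁺(t)`, `M(t) = Φ⁺(t)Φ(t)` and
`L(t) = M'(t) + M(t)Q(t) - Q(t)M(t)`. In particular, if `L(t)Φ⁺(t) = 0` for all `t`,
then `(d/dt)Φ⁺(t) + Φ⁺(t)P(t) - Q(t)Φ⁺(t) = 0` for all `t`. -/
theorem pseudoinverse_derivative_identity (m n : ℕ) (hn : 1 ≤ n) (hnm : n < m)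
    (Q : ℝ → Matrix (Fin m) (Fin m) ℝ)
    (Φ : ℝ → Matrix (Fin n) (Fin m) ℝ) (Φp : ℝ → Matrix (Fin m) (Fin n) ℝ)
    (Φ' : ℝ → Matrix (Fin n) (Fin m) ℝ) (Φp' : ℝ → Matrix (Fin m) (Fin n) ℝ)
    (hQ : ∀ i j, Continuous fun t => Q t i j)
    (hΦ : ∀ t i j, HasDerivAt (fun s => Φ s i j) (Φ' t i j) t)
    (hΦc : ∀ i j, Continuous fun t => Φ' t i j)
    (hΦp : ∀ t i j, HasDerivAt (fun s => Φp s i j) (Φp' t i j) t)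
    (hΦpc : ∀ i j, Continuous fun t => Φp' t i j)
    (hpseudo : ∀ t, Φ t * Φp t = 1)
    (M M' : ℝ → Matrix (Fin m) (Fin m) ℝ)
    (hM : ∀ t, M t = Φp t * Φ t)
    (hM' : ∀ t i j, HasDerivAt (fun s => M s i j) (M' t i j) t)
    (P : ℝ → Matrix (Fin n) (Fin n) ℝ)
    (hP : ∀ t, P t = (Φ' t + Φ t * Q t) * Φp t)
    (L : ℝ → Matrix (Fin m) (Fin m) ℝ)
    (hLdef : ∀ t, L t = M' t + M t * Q t - Q t * M t) :
    (∀ t : ℝ, Φp' t + Φp t * P t - Q t * Φp t = L t * Φp t) ∧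
    ((∀ t : ℝ, L t * Φp t = 0) → ∀ t : ℝ, Φp' t + Φp t * P t - Q t * Φp t = 0) := by
  have key : ∀ t, M' t = Φp' t * Φ t + Φp t * Φ' t := by
    intro t
    ext i j
    refine (hM' t i j).unique ?_
    have h : HasDerivAt (fun s => ∑ k, Φp s i k * Φ s k j)
        (∑ k, (Φp' t i k * Φ t k j + Φp t i k * Φ' t k j)) t :=
      HasDerivAt.fun_sum fun k _ => (hΦp t i k).mul (hΦ t k j)
    simpa [hM, Matrix.mul_apply, Finset.sum_add_distrib] using h
  have main : ∀ t : ℝ, Φp' t + Φp t * P t - Q t * Φp t = L t * Φp t := by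
    intro t
    rw [hLdef, key, hP, hM]
    simp only [Matrix.add_mul, Matrix.sub_mul, Matrix.mul_add, Matrix.mul_assoc, hpseudo,
      Matrix.mul_one]
    abel
  exact ⟨main, fun h t => (main t).trans (h t)⟩
end

section
/- (Theorem 1, assertion 2, sufficiency) Suppose L(t)·Φ⁺(t) = 0 for all t ∈ ℝ, where L(t) := M'(t) + M(t)Q(t) − Q(t)M(t). Let X : ℝ → M_n(ℝ) be differentiable with X'(t) = P(t)·X(t) for all t and X(0) = E_n, where P(t) := (Φ'(t) + Φ(t)Q(t))·Φ⁺(t). Let y : ℝ → ℝ^m be differentiable with y'(t) = Q(t)·y(t) for all t, and suppose y(t₀) = Φ⁺(t₀)·X(t₀)·c for some t₀ ∈ ℝ and c ∈ ℝ^n. Then y(t) = Φ⁺(t)·X(t)·c for all t ∈ ℝ; in particular y(t) ∈ M^n(t) = {y : M(t)·y = y} for all t ∈ ℝ. -/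
open Matrix

lemma hasDerivAt_mul_entry {a b d : ℕ} {A A' : ℝ → Matrix (Fin a) (Fin b) ℝ}
    {B B' : ℝ → Matrix (Fin b) (Fin d) ℝ} (t : ℝ)
    (hA : ∀ i j, HasDerivAt (fun s => A s i j) (A' t i j) t)
    (hB : ∀ i j, HasDerivAt (fun s => B s i j) (B' t i j) t) (i : Fin a) (j : Fin d) :
    HasDerivAt (fun s => (A s * B s) i j) ((A' t * B t + A t * B' t) i j) t := by
  simp only [Matrix.mul_apply, Matrix.add_apply]
  rw [← Finset.sum_add_distrib]
  exact HasDerivAt.fun_sum fun k _ => (hA i k).mul (hB k j)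

attribute [local instance] Matrix.linftyOpNormedAddCommGroup in
lemma mulVec_lipschitz_bound {m : ℕ} (Q : ℝ → Matrix (Fin m) (Fin m) ℝ)
    (hQ : ∀ i j, Continuous fun t => Q t i j) (a b : ℝ) :
    ∃ K : NNReal, ∀ t ∈ Set.Ioo a b, LipschitzOnWith K (fun x => Q t *ᵥ x) Set.univ := by
  have hc : Continuous Q := continuous_matrix hQ
  obtain ⟨C, hC⟩ := (isCompact_Icc (a := a) (b := b)).exists_bound_of_continuousOn hc.continuousOn
  refine ⟨C.toNNReal, fun t ht => LipschitzOnWith.of_dist_le_mul fun x _ z _ => ?_⟩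
  rw [dist_eq_norm, dist_eq_norm, ← Matrix.mulVec_sub]
  refine (Matrix.linfty_opNorm_mulVec _ _).trans ?_
  gcongr
  exact (hC t (Set.Ioo_subset_Icc_self ht)).trans (Real.le_coe_toNNReal C)


/-- Theorem 1, assertion 2, sufficiency: if `L(t)Φ⁺(t) = 0` for all `t`, `X` is the
fundamental matrix of `x' = P(t)x` with `P(t) = (Φ'(t) + Φ(t)Q(t))Φ⁺(t)`, and `y` is a
solution of `y' = Q(t)y` with `y(t₀) = Φ⁺(t₀)X(t₀)c`, then `y(t) = Φ⁺(t)X(t)c` for all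
`t`; in particular `y(t) ∈ Mⁿ(t)` for all `t`. -/
theorem solution_stays_on_Mn_of_L_Phip_eq_zero (m n : ℕ) (hn : 1 ≤ n) (hnm : n < m)
    (Q : ℝ → Matrix (Fin m) (Fin m) ℝ)
    (Φ : ℝ → Matrix (Fin n) (Fin m) ℝ) (Φp : ℝ → Matrix (Fin m) (Fin n) ℝ)
    (Φ' : ℝ → Matrix (Fin n) (Fin m) ℝ) (Φp' : ℝ → Matrix (Fin m) (Fin n) ℝ)
    (hQ : ∀ i j, Continuous fun t => Q t i j)
    (hΦ : ∀ t i j, HasDerivAt (fun s => Φ s i j) (Φ' t i j) t)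
    (hΦc : ∀ i j, Continuous fun t => Φ' t i j)
    (hΦp : ∀ t i j, HasDerivAt (fun s => Φp s i j) (Φp' t i j) t)
    (hΦpc : ∀ i j, Continuous fun t => Φp' t i j)
    (hpseudo : ∀ t, Φ t * Φp t = 1)
    (M M' : ℝ → Matrix (Fin m) (Fin m) ℝ)
    (hM : ∀ t, M t = Φp t * Φ t)
    (hM' : ∀ t i j, HasDerivAt (fun s => M s i j) (M' t i j) t)
    (hL : ∀ t, (M' t + M t * Q t - Q t * M t) * Φp t = 0)
    (P : ℝ → Matrix (Fin n) (Fin n) ℝ)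
    (hP : ∀ t, P t = (Φ' t + Φ t * Q t) * Φp t)
    (X : ℝ → Matrix (Fin n) (Fin n) ℝ)
    (hX : ∀ t i j, HasDerivAt (fun s => X s i j) ((P t * X t) i j) t)
    (hX0 : X 0 = 1)
    (y : ℝ → Fin m → ℝ)
    (hy : ∀ t, HasDerivAt y (Q t *ᵥ y t) t)
    (t₀ : ℝ) (c : Fin n → ℝ)
    (hinit : y t₀ = Φp t₀ *ᵥ (X t₀ *ᵥ c)) :
    (∀ t : ℝ, y t = Φp t *ᵥ (X t *ᵥ c)) ∧ (∀ t : ℝ, M t *ᵥ y t = y t) := by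
  have hMd : ∀ t, M' t = Φp' t * Φ t + Φp t * Φ' t := by
    intro t
    ext i j
    have h1 := hasDerivAt_mul_entry t (hΦp t) (hΦ t) i j
    have h2 := hM' t i j
    simp only [hM] at h2
    exact h2.unique h1
  have key : ∀ t, Φp' t + Φp t * P t = Q t * Φp t := by
    intro t
    have h := hL t
    rw [hMd, hM, Matrix.sub_mul, sub_eq_zero] at h
    rw [hP]
    simp only [Matrix.add_mul, Matrix.mul_add, Matrix.mul_assoc, hpseudo, Matrix.mul_one] at h ⊢
    rw [← add_assoc, h]
  have hz : ∀ t, HasDerivAt (fun s => Φp s *ᵥ (X s *ᵥ c)) (Q t *ᵥ (Φp t *ᵥ (X t *ᵥ c))) t := by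
    intro t
    have e : Q t *ᵥ (Φp t *ᵥ (X t *ᵥ c)) = (Φp' t * X t + Φp t * (P t * X t)) *ᵥ c := by
      rw [← Matrix.mul_assoc, ← Matrix.add_mul, key]
      simp only [Matrix.mulVec_mulVec, Matrix.mul_assoc]
    rw [e]
    simp only [Matrix.mulVec_mulVec]
    rw [hasDerivAt_pi]
    intro i
    simp only [Matrix.mulVec, dotProduct]
    exact HasDerivAt.fun_sum fun k _ =>
      (hasDerivAt_mul_entry (B' := fun t => P t * X t) t (hΦp t) (hX t) i k).mul_const (c k)
  have main : ∀ t : ℝ, y t = Φp t *ᵥ (X t *ᵥ c) := by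
    intro t
    obtain ⟨K, hK⟩ := mulVec_lipschitz_bound Q hQ (min t t₀ - 1) (max t t₀ + 1)
    exact ODE_solution_unique_of_mem_Ioo (v := fun t x => Q t *ᵥ x) (s := fun _ => Set.univ)
      (t₀ := t₀) (g := fun s => Φp s *ᵥ (X s *ᵥ c)) hK (by constructor <;> grind)
      (fun s _ => ⟨hy s, trivial⟩)
      (fun s _ => ⟨hz s, trivial⟩) hinit (by constructor <;> grind)
  refine ⟨main, fun t => ?_⟩
  rw [main, hM, Matrix.mulVec_mulVec, Matrix.mul_assoc, hpseudo, Matrix.mul_one]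
end

section
/- (Theorem 1, assertion 3) Let Y : ℝ → M_m(ℝ) be differentiable with Y'(t) = Q(t)·Y(t) for all t and Y(0) = E. If for all t ∈ ℝ and all c ∈ ℝ^m one has M(t)·Y(t)·(E − M(0))·c = 0 (i.e., the subspace M^{m−n}(t) = {y : M(t)·y = 0} is an invariant manifold of y' = Q(t)y), then L(t)·Y(t)·(E − M(0))·c = 0 for all t ∈ ℝ and c ∈ ℝ^m, where L(t) := M'(t) + M(t)Q(t) − Q(t)M(t); that is, M^{m−n}(t) ⊆ ker L(t) for all t ∈ ℝ. -/
open Matrix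

/-- Theorem 1, assertion 3: if the subspace `M^{m-n}(t) = {y : M(t)y = 0}` is an invariant
manifold of `y' = Q(t)y` (expressed via the fundamental matrix `Y`), then
`M^{m-n}(t) ⊆ ker L(t)` for all `t`, where `L(t) = M'(t) + M(t)Q(t) - Q(t)M(t)`. -/
theorem ker_L_contains_Mmn_of_invariant (m n : ℕ) (hn : 1 ≤ n) (hnm : n < m)
    (Q : ℝ → Matrix (Fin m) (Fin m) ℝ)
    (Φ : ℝ → Matrix (Fin n) (Fin m) ℝ) (Φp : ℝ → Matrix (Fin m) (Fin n) ℝ)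
    (Φ' : ℝ → Matrix (Fin n) (Fin m) ℝ) (Φp' : ℝ → Matrix (Fin m) (Fin n) ℝ)
    (hQ : ∀ i j, Continuous fun t => Q t i j)
    (hΦ : ∀ t i j, HasDerivAt (fun s => Φ s i j) (Φ' t i j) t)
    (hΦc : ∀ i j, Continuous fun t => Φ' t i j)
    (hΦp : ∀ t i j, HasDerivAt (fun s => Φp s i j) (Φp' t i j) t)
    (hΦpc : ∀ i j, Continuous fun t => Φp' t i j)
    (hpseudo : ∀ t, Φ t * Φp t = 1)
    (M M' : ℝ → Matrix (Fin m) (Fin m) ℝ)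
    (hM : ∀ t, M t = Φp t * Φ t)
    (hM' : ∀ t i j, HasDerivAt (fun s => M s i j) (M' t i j) t)
    (Y : ℝ → Matrix (Fin m) (Fin m) ℝ)
    (hY : ∀ t i j, HasDerivAt (fun s => Y s i j) ((Q t * Y t) i j) t)
    (hY0 : Y 0 = 1)
    (hinv : ∀ (t : ℝ) (c : Fin m → ℝ), M t *ᵥ (Y t *ᵥ ((1 - M 0) *ᵥ c)) = 0) :
    ∀ (t : ℝ) (c : Fin m → ℝ),
      (M' t + M t * Q t - Q t * M t) *ᵥ (Y t *ᵥ ((1 - M 0) *ᵥ c)) = 0 := by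
  intro t c
  have h0 := fun s => hinv s c
  generalize (1 - M 0) *ᵥ c = v at h0 ⊢
  have hy : ∀ j, HasDerivAt (fun s => (Y s *ᵥ v) j) (((Q t * Y t) *ᵥ v) j) t := by
    intro j
    simp only [Matrix.mulVec, dotProduct]
    exact HasDerivAt.fun_sum fun k _ => (hY t j k).mul_const (v k)
  have key : M' t *ᵥ (Y t *ᵥ v) + M t *ᵥ ((Q t * Y t) *ᵥ v) = 0 := by
    funext i
    have h1 : HasDerivAt (fun s => ∑ j, M s i j * (Y s *ᵥ v) j)
        (∑ j, (M' t i j * (Y t *ᵥ v) j + M t i j * ((Q t * Y t) *ᵥ v) j)) t :=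
      HasDerivAt.fun_sum fun j _ => (hM' t i j).mul (hy j)
    have h2 : (fun s => ∑ j, M s i j * (Y s *ᵥ v) j) = fun _ => (0 : ℝ) := by
      funext s
      exact congrFun (h0 s) i
    rw [h2] at h1
    have h3 := h1.unique (hasDerivAt_const t (0 : ℝ))
    rw [Finset.sum_add_distrib] at h3
    exact h3
  rw [Matrix.sub_mulVec, Matrix.add_mulVec, ← Matrix.mulVec_mulVec _ (Q t) (M t), h0 t,
    Matrix.mulVec_zero, sub_zero, ← Matrix.mulVec_mulVec _ (M t) (Q t),
    Matrix.mulVec_mulVec _ (Q t) (Y t)]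
  exact key
end

section
/- (Theorem 1, assertion 1, necessity) Let Y : ℝ → M_m(ℝ) be differentiable with Y'(t) = Q(t)·Y(t) for all t, Y(0) = E, and Y(t) invertible for all t. Suppose that for all t ∈ ℝ both M(t)·Y(t)·M(0) = Y(t)·M(0) and M(t)·Y(t)·(E − M(0)) = 0 hold (i.e., the subspaces M^n(t) = {y : M(t)·y = y} and M^{m−n}(t) = {y : M(t)·y = 0}, taken together, are invariant manifolds of y' = Q(t)y). Then L(t) := M'(t) + M(t)Q(t) − Q(t)M(t) = 0 for all t ∈ ℝ. -/
open Matrix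

/-- Theorem 1, assertion 1, necessity: if the subspaces `Mⁿ(t)` and `M^{m-n}(t)`, taken
together, are invariant manifolds of `y' = Q(t)y` (expressed via the fundamental matrix
`Y`), then `L(t) = M'(t) + M(t)Q(t) - Q(t)M(t) = 0` for all `t`. -/
theorem L_eq_zero_of_both_invariant (m n : ℕ) (hn : 1 ≤ n) (hnm : n < m)
    (Q : ℝ → Matrix (Fin m) (Fin m) ℝ)
    (Φ : ℝ → Matrix (Fin n) (Fin m) ℝ) (Φp : ℝ → Matrix (Fin m) (Fin n) ℝ)
    (Φ' : ℝ → Matrix (Fin n) (Fin m) ℝ) (Φp' : ℝ → Matrix (Fin m) (Fin n) ℝ)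
    (hQ : ∀ i j, Continuous fun t => Q t i j)
    (hΦ : ∀ t i j, HasDerivAt (fun s => Φ s i j) (Φ' t i j) t)
    (hΦc : ∀ i j, Continuous fun t => Φ' t i j)
    (hΦp : ∀ t i j, HasDerivAt (fun s => Φp s i j) (Φp' t i j) t)
    (hΦpc : ∀ i j, Continuous fun t => Φp' t i j)
    (hpseudo : ∀ t, Φ t * Φp t = 1)
    (M M' : ℝ → Matrix (Fin m) (Fin m) ℝ)
    (hM : ∀ t, M t = Φp t * Φ t)
    (hM' : ∀ t i j, HasDerivAt (fun s => M s i j) (M' t i j) t)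
    (Y : ℝ → Matrix (Fin m) (Fin m) ℝ)
    (hY : ∀ t i j, HasDerivAt (fun s => Y s i j) ((Q t * Y t) i j) t)
    (hY0 : Y 0 = 1)
    (hYinv : ∀ t, IsUnit (Y t))
    (hinv1 : ∀ t, M t * Y t * M 0 = Y t * M 0)
    (hinv2 : ∀ t, M t * Y t * (1 - M 0) = 0) :
    ∀ t : ℝ, M' t + M t * Q t - Q t * M t = 0 := by
  intro t
  have key : ∀ s, M s * Y s = Y s * M 0 := by
    intro s
    have h1 := hinv1 s
    have h2 := hinv2 s
    rw [mul_sub, mul_one, sub_eq_zero] at h2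
    rw [h2, h1]
  have hd : M' t * Y t + M t * (Q t * Y t) = (Q t * Y t) * M 0 := by
    ext i j
    have e1 : HasDerivAt (fun s => (M s * Y s) i j)
        ((M' t * Y t + M t * (Q t * Y t)) i j) t := by
      simp only [Matrix.add_apply, Matrix.mul_apply (M := M' t),
        Matrix.mul_apply (M := M t), Matrix.mul_apply (M := M _) (N := Y _),
        ← Finset.sum_add_distrib]
      exact HasDerivAt.fun_sum fun k _ => (hM' t i k).mul (hY t k j)
    have e2 : HasDerivAt (fun s => (Y s * M 0) i j) (((Q t * Y t) * M 0) i j) t := by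
      rw [Matrix.mul_apply (M := Q t * Y t)]
      simp only [Matrix.mul_apply (M := Y _)]
      exact HasDerivAt.fun_sum fun k _ => (hY t i k).mul_const (M 0 k j)
    simp only [key] at e1
    exact e1.unique e2
  apply (hYinv t).mul_right_cancel
  rw [zero_mul, sub_mul, add_mul, mul_assoc (M t), hd, mul_assoc (Q t) (M t), key,
    mul_assoc (Q t), sub_self]
end
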